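/- arXiv:2501.10112 — 5 statements merged into one kernel-verified Lean document; each statement's English description precedes it below -/
import Mathlib

section
/- For every n ≥ 1, the complement of the path graph P_{2n} on 2n vertices is word-representable. -/
/-- Two distinct letters `x` and `y` alternate in the word `w` if, after deleting all
letters other than `x` and `y`, no two consecutive letters of the remaining word are equal. -/
def Alternate {V : Type*} [DecidableEq V] (w : List V) (x y : V) : Prop :=
  (w.filter fun z => decide (z = x ∨ z = y)).Chain' (· ≠ ·)

/-- A word `w` represents the simple graph `G` if every vertex occurs in `w` at least once
and two distinct vertices alternate in `w` exactly when they are adjacent in `G`. -/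
def Represents {V : Type*} [DecidableEq V] (G : SimpleGraph V) (w : List V) : Prop :=
  (∀ v : V, v ∈ w) ∧ ∀ x y : V, x ≠ y → (Alternate w x y ↔ G.Adj x y)

/-- A simple graph is word-representable if some word represents it. -/
def WordRepresentable {V : Type*} [DecidableEq V] (G : SimpleGraph V) : Prop :=
  ∃ w : List V, Represents G w

/-- The path graph on `n` vertices: `i` and `j` are adjacent iff `|i - j| = 1`. -/
def pathGraph (n : ℕ) : SimpleGraph (Fin n) :=
  SimpleGraph.fromRel fun i j => (i : ℕ) + 1 = (j : ℕ)

/-!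
If a word is the concatenation of two permutations of `V`, two letters alternate in it exactly when
both permutations list them in the same order, so the complement of every permutation graph is
word-representable. A path is a permutation graph: raising the even integers by `2` reverses exactly
the pairs `i, i + 1` with `i` even, raising the odd ones by `2` reverses exactly those with `i` odd,
and each edge of the path is thus reversed by just one of the two orders.
-/

section Words

variable {V α β : Type*}

theorem exists_pairwise_lt_forall_mem [Finite V] [LinearOrder α] {f : V → α}
    (hf : Function.Injective f) : ∃ l : List V, l.Pairwise (f · < f ·) ∧ ∀ v, v ∈ l := by
  have := Fintype.ofFinite V
  let : LinearOrder V := LinearOrder.lift' f hf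
  exact ⟨Finset.univ.sort, Finset.univ.sortedLT_sort.pairwise, by simp⟩

variable [DecidableEq V]

theorem filter_eq_pair_of_pairwise_lt [Preorder α] {f : V → α} {l : List V}
    (hl : l.Pairwise (f · < f ·)) {x y : V} (hx : x ∈ l) (hy : y ∈ l) (hxy : f x < f y) :
    l.filter (fun z => decide (z = x ∨ z = y)) = [x, y] := by
  have hne : x ≠ y := ne_of_apply_ne f hxy.ne
  have hnodup : l.Nodup := hl.imp fun h => ne_of_apply_ne f h.ne
  have hperm : (l.filter fun z => decide (z = x ∨ z = y)).Perm [x, y] := by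
    rw [List.perm_ext_iff_of_nodup (hnodup.filter _) (by simpa using hne)]
    simp only [List.mem_filter, decide_eq_true_eq, List.mem_cons, List.not_mem_nil, or_false,
      and_iff_right_iff_imp]
    rintro z (rfl | rfl) <;> assumption
  exact hperm.eq_of_pairwise (fun _ _ _ _ h h' => (lt_asymm h h').elim)
    (hl.filter _) (List.pairwise_pair.2 hxy)

theorem alternate_iff_isChain {w : List V} {x y : V} :
    Alternate w x y ↔ (w.filter fun z => decide (z = x ∨ z = y)).IsChain (· ≠ ·) :=
  Iff.rfl

theorem alternate_comm {w : List V} {x y : V} : Alternate w x y ↔ Alternate w y x := by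
  simp only [alternate_iff_isChain, or_comm]

theorem alternate_append_iff_lt [Preorder α] [LinearOrder β] {f : V → α} {g : V → β}
    {l k : List V} (hl : l.Pairwise (f · < f ·)) (hk : k.Pairwise (g · < g ·)) {x y : V}
    (hxl : x ∈ l) (hyl : y ∈ l) (hxk : x ∈ k) (hyk : y ∈ k) (hf : f x < f y) (hg : g x ≠ g y) :
    Alternate (l ++ k) x y ↔ g x < g y := by
  have hne : x ≠ y := ne_of_apply_ne f hf.ne
  rw [alternate_iff_isChain, List.filter_append, filter_eq_pair_of_pairwise_lt hl hxl hyl hf]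
  rcases hg.lt_or_gt with h | h
  · rw [filter_eq_pair_of_pairwise_lt hk hxk hyk h]
    simp [h, hne, hne.symm]
  · have hk_filter : k.filter (fun z => decide (z = x ∨ z = y)) = [y, x] := by
      simpa only [or_comm] using filter_eq_pair_of_pairwise_lt hk hyk hxk h
    rw [hk_filter]
    simp [h.le]

end Words

section InversionGraph

variable {V α β : Type*}

/-- The permutation graph of two orders on `V`, encoded by the labellings `f` and `g` that they are
pulled back along: two vertices are adjacent when the orders list them oppositely. -/
def inversionGraph [Preorder α] [Preorder β] (f : V → α) (g : V → β) : SimpleGraph V :=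
  SimpleGraph.fromRel fun x y => f x < f y ∧ g y < g x

theorem compl_inversionGraph_adj_iff_lt [Preorder α] [LinearOrder β] {f : V → α} {g : V → β}
    {x y : V} (hf : f x < f y) (hg : g x ≠ g y) : (inversionGraph f g)ᶜ.Adj x y ↔ g x < g y := by
  have hne : x ≠ y := ne_of_apply_ne f hf.ne
  simp [inversionGraph, hne, hf, hf.not_gt, hg.le_iff_lt]

theorem wordRepresentable_compl_inversionGraph [Finite V] [DecidableEq V] [LinearOrder α]
    [LinearOrder β] {f : V → α} {g : V → β} (hf : Function.Injective f)
    (hg : Function.Injective g) : WordRepresentable (inversionGraph f g)ᶜ := by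
  obtain ⟨l, hl, hl_mem⟩ := exists_pairwise_lt_forall_mem hf
  obtain ⟨k, hk, hk_mem⟩ := exists_pairwise_lt_forall_mem hg
  refine ⟨l ++ k, fun v => List.mem_append_left k (hl_mem v), fun x y hne => ?_⟩
  wlog hxy : f x < f y generalizing x y
  · rw [alternate_comm, SimpleGraph.adj_comm]
    exact this y x hne.symm ((hf.ne hne).lt_or_gt.resolve_left hxy)
  rw [alternate_append_iff_lt hl hk (hl_mem x) (hl_mem y) (hk_mem x) (hk_mem y) hxy (hg.ne hne),
    compl_inversionGraph_adj_iff_lt hxy (hg.ne hne)]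

end InversionGraph

section Path

/-- The labelling of `ℕ` that raises the integers of parity `r` by `2`. For `r = 0` and `r = 1` it
encodes the two orders whose permutation graph is a path. -/
def raiseParity (r i : ℕ) : ℕ :=
  if i % 2 = r then i + 2 else i

theorem raiseParity_injective (r : ℕ) : Function.Injective (raiseParity r) := by
  intro i j h
  simp only [raiseParity] at h
  split_ifs at h <;> omega

theorem raiseParity_lt_raiseParity_iff {r i j : ℕ} (hij : i < j) :
    raiseParity r j < raiseParity r i ↔ i % 2 = r ∧ i + 1 = j := by
  simp only [raiseParity]
  split_ifs <;> omega

theorem pathGraph_eq_inversionGraph (m : ℕ) :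
    pathGraph m = inversionGraph (fun i : Fin m => raiseParity 0 i) (fun i => raiseParity 1 i) := by
  ext x y
  wlog hxy : x < y generalizing x y
  · rcases (not_lt.1 hxy).eq_or_lt with rfl | hyx
    · simp only [SimpleGraph.irrefl]
    · rw [SimpleGraph.adj_comm, this y x hyx, SimpleGraph.adj_comm]
  have reversed_iff (r : ℕ) := raiseParity_lt_raiseParity_iff (r := r) (Fin.lt_def.1 hxy)
  have preserved_iff (r : ℕ) :
      raiseParity r x < raiseParity r y ↔ ¬((x : ℕ) % 2 = r ∧ (x : ℕ) + 1 = y) := by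
    rw [← reversed_iff, not_lt,
      ((raiseParity_injective r).ne (Fin.val_ne_of_ne hxy.ne)).le_iff_lt]
  simp only [pathGraph, inversionGraph, SimpleGraph.fromRel_adj, reversed_iff, preserved_iff]
  omega

end Path

theorem complement_pathGraph_even_wordRepresentable_general (m : ℕ) :
    WordRepresentable (pathGraph m)ᶜ := by
  rw [pathGraph_eq_inversionGraph]
  exact wordRepresentable_compl_inversionGraph
    ((raiseParity_injective 0).comp Fin.val_injective)
    ((raiseParity_injective 1).comp Fin.val_injective)

/-- The complement of the path graph `P_{2n}` on `2n` vertices is word-representable. -/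
theorem complement_pathGraph_even_wordRepresentable :
    ∀ n : ℕ, 1 ≤ n → WordRepresentable (pathGraph (2 * n))ᶜ :=
  fun n _ => complement_pathGraph_even_wordRepresentable_general (2 * n)
end

section
/- For every n ≥ 1, the complement of the path graph P_{2n} on 2n vertices is a comparability graph. -/
/-- A simple graph is a comparability graph if there is a strict partial order on its
vertices such that two distinct vertices are adjacent iff they are comparable. -/
def IsComparabilityGraph {V : Type*} (G : SimpleGraph V) : Prop :=
  ∃ r : V → V → Prop, IsStrictOrder V r ∧ ∀ x y : V, G.Adj x y ↔ (r x y ∨ r y x)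

theorem isStrictOrder_lt_and_not_covBy (α : Type*) [Preorder α] :
    IsStrictOrder α fun a b => a < b ∧ ¬a ⋖ b where
  irrefl a h := lt_irrefl a h.1
  trans _ _ _ hab hbc := ⟨hab.1.trans hbc.1, fun hac => hac.2 hab.1 hbc.1⟩

theorem compl_hasse_adj {α : Type*} [LinearOrder α] {a b : α} :
    (SimpleGraph.hasse α)ᶜ.Adj a b ↔ (a < b ∧ ¬a ⋖ b) ∨ (b < a ∧ ¬b ⋖ a) := by
  rw [SimpleGraph.compl_adj, SimpleGraph.hasse_adj, not_or]
  constructor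
  · rintro ⟨hne, hab, hba⟩
    exact hne.lt_or_gt.imp (⟨·, hab⟩) (⟨·, hba⟩)
  · rintro (⟨hlt, hab⟩ | ⟨hlt, hba⟩)
    · exact ⟨hlt.ne, hab, fun hba => hlt.asymm hba.lt⟩
    · exact ⟨hlt.ne', fun hab => hlt.asymm hab.lt, hba⟩

theorem isComparabilityGraph_compl_hasse (α : Type*) [LinearOrder α] :
    IsComparabilityGraph (SimpleGraph.hasse α)ᶜ :=
  ⟨_, isStrictOrder_lt_and_not_covBy α, fun _ _ => compl_hasse_adj⟩

theorem pathGraph_eq_simpleGraph_pathGraph (n : ℕ) : pathGraph n = SimpleGraph.pathGraph n := by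
  ext i j
  rw [SimpleGraph.pathGraph_adj, pathGraph, SimpleGraph.fromRel_adj, and_iff_right_iff_imp]
  rintro (h | h) rfl <;> omega

theorem complement_pathGraph_even_comparability_general (n : ℕ) :
    IsComparabilityGraph (pathGraph n)ᶜ := by
  rw [pathGraph_eq_simpleGraph_pathGraph]
  exact isComparabilityGraph_compl_hasse (Fin n)

/-- The complement of the path graph `P_{2n}` on `2n` vertices is a comparability graph. -/
theorem complement_pathGraph_even_comparability :
    ∀ n : ℕ, 1 ≤ n → IsComparabilityGraph (pathGraph (2 * n))ᶜ :=
  fun n _ => complement_pathGraph_even_comparability_general (2 * n)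
end

section
/- For every n ≥ 3, the complement of the crown graph H_{n,n} is not a comparability graph. -/
/-- The crown graph `H_{n,n}`: a bipartite graph on vertex set
`{x_1, …, x_n} ∪ {y_1, …, y_n}` (encoded as `Fin n ⊕ Fin n`) in which `x i` and `y j`
are adjacent iff `i ≠ j`. -/
def crownGraph (n : ℕ) : SimpleGraph (Fin n ⊕ Fin n) :=
  SimpleGraph.fromRel fun u v =>
    match u, v with
    | Sum.inl i, Sum.inr j => i ≠ j
    | _, _ => False

/-!
In a transitive orientation of a graph, two edges `ab`, `ac` with `b` and `c` non-adjacent are both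
directed out of `a` or both into `a`. Hence, if the edge from a clique vertex to a private neighbour
is directed outwards, so are the edges from that vertex to the rest of the clique, which can happen
for only one clique vertex; reversing the orientation, at most one of these edges is directed
inwards. A clique of a comparability graph whose vertices all have private neighbours thus has at
most two vertices, whereas in the complement of `H_{n,n}` the `x_i` form such a clique of size `n`.
-/

/-- A clique `f` together with a private neighbour `g i` of each clique vertex `f i`: `g i` is
adjacent to `f i` and to no other clique vertex. With at least three clique vertices it obstructs
transitive orientability, whatever the edges among the `g i`. -/
structure IsCliqueWithPrivateNeighbors {V ι : Type*} (G : SimpleGraph V) (f g : ι → V) : Prop where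
  pairwise_adj : Pairwise fun i j => G.Adj (f i) (f j)
  adj_iff_eq : ∀ i j, G.Adj (f i) (g j) ↔ i = j

section Orientation

variable {V ι : Type*} {G : SimpleGraph V} {r : V → V → Prop} {f g : ι → V}

theorem rel_of_rel_of_adj_of_not_adj [IsTrans V r] (hr : ∀ x y, G.Adj x y ↔ r x y ∨ r y x)
    {a b c : V} (hab : r a b) (hac : G.Adj a c) (hcb : ¬ G.Adj c b) : r a c :=
  ((hr a c).mp hac).resolve_right fun hca => hcb <| (hr c b).mpr (Or.inl (_root_.trans hca hab))

theorem IsCliqueWithPrivateNeighbors.subsingleton_setOf_rel [IsStrictOrder V r]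
    (hr : ∀ x y, G.Adj x y ↔ r x y ∨ r y x) (h : IsCliqueWithPrivateNeighbors G f g) :
    {i | r (f i) (g i)}.Subsingleton := by
  intro i hi j hj
  by_contra hij
  have forced {k l : ι} (hk : r (f k) (g k)) (hkl : k ≠ l) : r (f k) (f l) :=
    rel_of_rel_of_adj_of_not_adj hr hk (h.pairwise_adj hkl) fun hlk =>
      hkl ((h.adj_iff_eq l k).mp hlk).symm
  exact asymm (forced hi hij) (forced hj (Ne.symm hij))

theorem IsCliqueWithPrivateNeighbors.card_le_two (h : IsCliqueWithPrivateNeighbors G f g)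
    (hG : IsComparabilityGraph G) : ENat.card ι ≤ 2 := by
  obtain ⟨r, _, hr⟩ := hG
  have subsingleton_out : {i | r (f i) (g i)}.Subsingleton := h.subsingleton_setOf_rel hr
  have subsingleton_in : {i | r (g i) (f i)}.Subsingleton :=
    h.subsingleton_setOf_rel (r := Function.swap r) fun x y => (hr x y).trans or_comm
  have cover : {i | r (f i) (g i)} ∪ {i | r (g i) (f i)} = Set.univ :=
    Set.eq_univ_of_forall fun i => (hr _ _).mp ((h.adj_iff_eq i i).mpr rfl)
  calc
    ENat.card ι = ({i | r (f i) (g i)} ∪ {i | r (g i) (f i)}).encard := by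
      rw [cover, Set.encard_univ]
    _ ≤ {i | r (f i) (g i)}.encard + {i | r (g i) (f i)}.encard := Set.encard_union_le _ _
    _ ≤ 1 + 1 := add_le_add (Set.encard_le_one_iff_subsingleton.mpr subsingleton_out)
      (Set.encard_le_one_iff_subsingleton.mpr subsingleton_in)
    _ = 2 := one_add_one_eq_two

end Orientation

theorem isCliqueWithPrivateNeighbors_compl_crownGraph (n : ℕ) :
    IsCliqueWithPrivateNeighbors (crownGraph n)ᶜ Sum.inl Sum.inr where
  pairwise_adj i j hij := by simp [crownGraph, hij]
  adj_iff_eq i j := by simp [crownGraph]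

/-- For every `n ≥ 3`, the complement of the crown graph `H_{n,n}` is not a
comparability graph. -/
theorem complement_crownGraph_not_comparability :
    ∀ n : ℕ, 3 ≤ n → ¬ IsComparabilityGraph (crownGraph n)ᶜ := by
  intro n hn hG
  have hcard : ENat.card (Fin n) ≤ 2 :=
    (isCliqueWithPrivateNeighbors_compl_crownGraph n).card_le_two hG
  have hn2 : n ≤ 2 := by simpa using hcard
  omega
end

section
/- Let G be a simple graph whose vertex set is partitioned into two cliques A and B, and let D be a semi-transitive orientation of G. Then every vertex of A is of type A, of type B, or of type C with respect to B, and symmetrically every vertex of B is of type A, of type B, or of type C with respect to A. -/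
/-- `dir` is an orientation of the simple graph `G`: it assigns to each edge exactly one
of its two directions. -/
def IsOrientation {V : Type*} (G : SimpleGraph V) (dir : V → V → Prop) : Prop :=
  (∀ x y : V, dir x y → G.Adj x y) ∧
  (∀ x y : V, G.Adj x y → dir x y ∨ dir y x) ∧
  (∀ x y : V, dir x y → ¬ dir y x)

/-- An orientation is acyclic if it has no directed cycle. -/
def OrientAcyclic {V : Type*} (dir : V → V → Prop) : Prop :=
  ∀ v : V, ¬ Relation.TransGen dir v v

/-- An orientation is shortcut-free if for every directed path
`f 0 → f 1 → ⋯ → f k` (`k ≥ 2`) such that `f 0 → f k` is an oriented edge,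
`f i → f j` is an oriented edge for all `i < j ≤ k`. -/
def ShortcutFree {V : Type*} (dir : V → V → Prop) : Prop :=
  ∀ (k : ℕ) (f : ℕ → V), 2 ≤ k → (∀ i, i < k → dir (f i) (f (i + 1))) →
    dir (f 0) (f k) → ∀ i j, i < j → j ≤ k → dir (f i) (f j)

/-- An orientation is semi-transitive if it is acyclic and shortcut-free. -/
def SemiTransitive {V : Type*} (dir : V → V → Prop) : Prop :=
  OrientAcyclic dir ∧ ShortcutFree dir

/-- `S` is an interval of the clique `B` with respect to the order given by `dir`:
any vertex of `B` lying (in the direction `dir`) between two vertices of `S` is in `S`. -/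
def IsIntervalIn {V : Type*} (dir : V → V → Prop) (B S : Set V) : Prop :=
  S ⊆ B ∧ ∀ u v w : V, u ∈ S → v ∈ B → w ∈ S → dir u v → dir v w → v ∈ S

/-- `S` is an initial segment of the clique `B` with respect to the order given by `dir`. -/
def IsInitialSegIn {V : Type*} (dir : V → V → Prop) (B S : Set V) : Prop :=
  S ⊆ B ∧ ∀ u v : V, u ∈ B → v ∈ S → dir u v → u ∈ S

/-- `S` is a final segment of the clique `B` with respect to the order given by `dir`. -/
def IsFinalSegIn {V : Type*} (dir : V → V → Prop) (B S : Set V) : Prop :=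
  S ⊆ B ∧ ∀ u v : V, u ∈ S → v ∈ B → dir u v → v ∈ S

/-- `x` is of type A with respect to the clique `B`: its neighbourhood in `B` is an
interval of `B` and every edge between `x` and `B` is oriented from `x` into `B`. -/
def TypeA {V : Type*} (G : SimpleGraph V) (dir : V → V → Prop) (B : Set V) (x : V) : Prop :=
  IsIntervalIn dir B {b ∈ B | G.Adj x b} ∧ ∀ b ∈ B, G.Adj x b → dir x b

/-- `x` is of type B with respect to the clique `B`: its neighbourhood in `B` is an
interval of `B` and every edge between `x` and `B` is oriented from `B` into `x`. -/
def TypeB {V : Type*} (G : SimpleGraph V) (dir : V → V → Prop) (B : Set V) (x : V) : Prop :=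
  IsIntervalIn dir B {b ∈ B | G.Adj x b} ∧ ∀ b ∈ B, G.Adj x b → dir b x

/-- `x` is of type C with respect to the clique `B`: its neighbourhood in `B` is the
disjoint union of a nonempty initial segment `S` of `B`, whose edges are oriented into
`x`, and a nonempty final segment `T` of `B`, whose edges are oriented out of `x`. -/
def TypeC {V : Type*} (G : SimpleGraph V) (dir : V → V → Prop) (B : Set V) (x : V) : Prop :=
  ∃ S T : Set V, {b ∈ B | G.Adj x b} = S ∪ T ∧ S.Nonempty ∧ T.Nonempty ∧
    Disjoint S T ∧ IsInitialSegIn dir B S ∧ IsFinalSegIn dir B T ∧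
    (∀ b ∈ S, dir b x) ∧ (∀ b ∈ T, dir x b)

/-!
The argument rests on directed paths `a → b → c → d` with `a → d`: since there are no shortcuts,
`a → c` and `b → d`. If the edges between `x` and the clique `B` all point the same way, applying
this to a path whose ends are `x` and a neighbour of `x` shows that `N_B(x)` is an interval. If
`s → x → t` with `s, t ∈ B`, then the ends of a path `u → v → x → t` or `s → x → u → v` with
`u, v ∈ B` are joined by an edge, directed forwards by acyclicity. Hence `u → x` in the first case
and `x → v` in the second: the in-neighbours of `x` form an initial segment of `B` and the
out-neighbours a final one.
-/

section

variable {V : Type*} {G : SimpleGraph V} {dir : V → V → Prop} {B : Set V} {x : V}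

/-- The in-neighbours in `B` of the vertex `x`: the set `S` of a vertex of type C. -/
def inNeighborsIn (dir : V → V → Prop) (B : Set V) (x : V) : Set V :=
  {b ∈ B | dir b x}

/-- The out-neighbours in `B` of the vertex `x`: the set `T` of a vertex of type C. -/
def outNeighborsIn (dir : V → V → Prop) (B : Set V) (x : V) : Set V :=
  {b ∈ B | dir x b}

namespace IsOrientation

theorem neighborsIn_eq_union (hor : IsOrientation G dir) (B : Set V) (x : V) :
    {b ∈ B | G.Adj x b} = inNeighborsIn dir B x ∪ outNeighborsIn dir B x := by
  obtain ⟨adj_of_dir, dir_or_dir, -⟩ := hor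
  ext b
  constructor
  · rintro ⟨hb, hadj⟩
    exact (dir_or_dir x b hadj).symm.imp (⟨hb, ·⟩) (⟨hb, ·⟩)
  · rintro (⟨hb, hbx⟩ | ⟨hb, hxb⟩)
    · exact ⟨hb, (adj_of_dir b x hbx).symm⟩
    · exact ⟨hb, adj_of_dir x b hxb⟩

theorem disjoint_inNeighborsIn_outNeighborsIn (hor : IsOrientation G dir) (B : Set V) (x : V) :
    Disjoint (inNeighborsIn dir B x) (outNeighborsIn dir B x) :=
  Set.disjoint_left.2 fun b hbx hxb => hor.2.2 b x hbx.2 hxb.2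

theorem dir_of_transGen_of_isClique (hor : IsOrientation G dir) (hac : OrientAcyclic dir)
    (hB : G.IsClique B) {u v : V} (hu : u ∈ B) (hv : v ∈ B) (huv : Relation.TransGen dir u v) :
    dir u v := by
  have hne : u ≠ v := by
    rintro rfl
    exact hac u huv
  exact (hor.2.1 u v (hB hu hv hne)).resolve_right fun hvu => hac u (huv.tail hvu)

end IsOrientation

namespace ShortcutFree

theorem dir_and_dir_of_path (hsf : ShortcutFree dir) {a b c d : V}
    (hab : dir a b) (hbc : dir b c) (hcd : dir c d) (had : dir a d) :
    dir a c ∧ dir b d := by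
  let f : ℕ → V := fun n => [a, b, c].getD n d
  have hpath : ∀ i < 3, dir (f i) (f (i + 1)) := by
    intro i hi
    interval_cases i
    exacts [hab, hbc, hcd]
  have hdir := hsf 3 f (by decide) hpath had
  exact ⟨hdir 0 2 (by decide) (by decide), hdir 1 3 (by decide) (by decide)⟩

theorem isIntervalIn_inNeighborsIn (hsf : ShortcutFree dir) (B : Set V) (x : V) :
    IsIntervalIn dir B (inNeighborsIn dir B x) :=
  ⟨Set.sep_subset _ _, fun _ _ _ ⟨_, hux⟩ hv ⟨_, hwx⟩ huv hvw =>
    ⟨hv, (hsf.dir_and_dir_of_path huv hvw hwx hux).2⟩⟩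

theorem isIntervalIn_outNeighborsIn (hsf : ShortcutFree dir) (B : Set V) (x : V) :
    IsIntervalIn dir B (outNeighborsIn dir B x) :=
  ⟨Set.sep_subset _ _, fun _ _ _ ⟨_, hxu⟩ hv ⟨_, hxw⟩ huv hvw =>
    ⟨hv, (hsf.dir_and_dir_of_path hxu huv hvw hxw).1⟩⟩

end ShortcutFree

theorem isInitialSegIn_inNeighborsIn (hor : IsOrientation G dir) (hst : SemiTransitive dir)
    (hB : G.IsClique B) (hout : (outNeighborsIn dir B x).Nonempty) :
    IsInitialSegIn dir B (inNeighborsIn dir B x) := by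
  obtain ⟨hac, hsf⟩ := hst
  obtain ⟨t, ht, hxt⟩ := hout
  refine ⟨Set.sep_subset _ _, fun u v hu ⟨_, hvx⟩ huv => ⟨hu, ?_⟩⟩
  have hut : dir u t :=
    hor.dir_of_transGen_of_isClique hac hB hu ht (.head huv (.head hvx (.single hxt)))
  exact (hsf.dir_and_dir_of_path huv hvx hxt hut).1

theorem isFinalSegIn_outNeighborsIn (hor : IsOrientation G dir) (hst : SemiTransitive dir)
    (hB : G.IsClique B) (hin : (inNeighborsIn dir B x).Nonempty) :
    IsFinalSegIn dir B (outNeighborsIn dir B x) := by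
  obtain ⟨hac, hsf⟩ := hst
  obtain ⟨s, hs, hsx⟩ := hin
  refine ⟨Set.sep_subset _ _, fun u v ⟨_, hxu⟩ hv huv => ⟨hv, ?_⟩⟩
  have hsv : dir s v :=
    hor.dir_of_transGen_of_isClique hac hB hs hv (.head hsx (.head hxu (.single huv)))
  exact (hsf.dir_and_dir_of_path hsx hxu huv hsv).2

theorem typeA_of_inNeighborsIn_eq_empty (hor : IsOrientation G dir) (hsf : ShortcutFree dir)
    (hin : inNeighborsIn dir B x = ∅) : TypeA G dir B x := by
  have hN : {b ∈ B | G.Adj x b} = outNeighborsIn dir B x := by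
    rw [hor.neighborsIn_eq_union, hin, Set.empty_union]
  exact ⟨hN ▸ hsf.isIntervalIn_outNeighborsIn B x, fun b hb hadj => (hN.subset ⟨hb, hadj⟩).2⟩

theorem typeB_of_outNeighborsIn_eq_empty (hor : IsOrientation G dir) (hsf : ShortcutFree dir)
    (hout : outNeighborsIn dir B x = ∅) : TypeB G dir B x := by
  have hN : {b ∈ B | G.Adj x b} = inNeighborsIn dir B x := by
    rw [hor.neighborsIn_eq_union, hout, Set.union_empty]
  exact ⟨hN ▸ hsf.isIntervalIn_inNeighborsIn B x, fun b hb hadj => (hN.subset ⟨hb, hadj⟩).2⟩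

theorem typeC_of_nonempty (hor : IsOrientation G dir) (hst : SemiTransitive dir)
    (hB : G.IsClique B) (hin : (inNeighborsIn dir B x).Nonempty)
    (hout : (outNeighborsIn dir B x).Nonempty) : TypeC G dir B x :=
  ⟨inNeighborsIn dir B x, outNeighborsIn dir B x, hor.neighborsIn_eq_union B x, hin, hout,
    hor.disjoint_inNeighborsIn_outNeighborsIn B x, isInitialSegIn_inNeighborsIn hor hst hB hout,
    isFinalSegIn_outNeighborsIn hor hst hB hin, fun _ hb => hb.2, fun _ hb => hb.2⟩

theorem cobipartite_semiTransitive_vertex_types_general (hor : IsOrientation G dir)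
    (hst : SemiTransitive dir) (hB : G.IsClique B) (x : V) :
    TypeA G dir B x ∨ TypeB G dir B x ∨ TypeC G dir B x := by
  rcases (inNeighborsIn dir B x).eq_empty_or_nonempty with hin | hin
  · exact .inl (typeA_of_inNeighborsIn_eq_empty hor hst.2 hin)
  rcases (outNeighborsIn dir B x).eq_empty_or_nonempty with hout | hout
  · exact .inr (.inl (typeB_of_outNeighborsIn_eq_empty hor hst.2 hout))
  · exact .inr (.inr (typeC_of_nonempty hor hst hB hin hout))

end

/-- Under any semi-transitive orientation of a co-bipartite graph with clique partition
`A ∪ B`, every vertex of `A` is of type A, type B or type C with respect to `B`, and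
every vertex of `B` is of type A, type B or type C with respect to `A`. -/
theorem cobipartite_semiTransitive_vertex_types
    {V : Type*} (G : SimpleGraph V) (A B : Set V)
    (hcover : A ∪ B = Set.univ) (hdisj : Disjoint A B)
    (hA : G.IsClique A) (hB : G.IsClique B)
    (dir : V → V → Prop) (hor : IsOrientation G dir) (hst : SemiTransitive dir) :
    (∀ x ∈ A, TypeA G dir B x ∨ TypeB G dir B x ∨ TypeC G dir B x) ∧
    (∀ x ∈ B, TypeA G dir A x ∨ TypeB G dir A x ∨ TypeC G dir A x) := by
  exact ⟨fun x _ => cobipartite_semiTransitive_vertex_types_general hor hst hB x,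
    fun x _ => cobipartite_semiTransitive_vertex_types_general hor hst hA x⟩
end

section
/- Let D be a semi-transitive orientation of a simple graph G whose vertex set is partitioned into two cliques A and B. Let x ∈ A and s, t ∈ B, and suppose the oriented edges s → t, s → x, and x → t all exist in D. Then for every y ∈ A with the edge between x and y oriented y → x: (a) there is no edge oriented t → y, and (b) if there is an edge oriented s → y, then y is adjacent to t. -/
open Relation

/-- The witness is indexed by `ℕ`, with junk values beyond `n`, to match the paths in
`ShortcutFree`. -/
theorem exists_path_of_transGen {α : Type*} {r : α → α → Prop} {a b : α}
    (h : TransGen r a b) :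
    ∃ (n : ℕ) (f : ℕ → α), 0 < n ∧ f 0 = a ∧ f n = b ∧ ∀ i < n, r (f i) (f (i + 1)) := by
  induction h using TransGen.head_induction_on with
  | @single a hab =>
    refine ⟨1, (fun | 0 => a | _ + 1 => b), one_pos, rfl, rfl, fun i hi => ?_⟩
    obtain rfl : i = 0 := Nat.lt_one_iff.mp hi
    exact hab
  | @head a c hac _ ih =>
    obtain ⟨n, f, -, rfl, hfn, hf⟩ := ih
    refine ⟨n + 1, (fun | 0 => a | i + 1 => f i), n.succ_pos, rfl, hfn, fun i hi => ?_⟩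
    cases i with
    | zero => exact hac
    | succ i => exact hf i (Nat.lt_of_succ_lt_succ hi)

section

variable {V : Type*} {dir : V → V → Prop}

theorem ShortcutFree.dir_of_dir_of_transGen (h : ShortcutFree dir) {a b c : V}
    (hab : dir a b) (hbc : TransGen dir b c) (hac : dir a c) : dir b c := by
  obtain ⟨n, f, hn, rfl, rfl, hf⟩ := exists_path_of_transGen hbc
  let path : ℕ → V := fun | 0 => a | i + 1 => f i
  have hpath : ∀ i < n + 1, dir (path i) (path (i + 1)) := by
    rintro (_ | i) hi
    · exact hab
    · exact hf i (Nat.lt_of_succ_lt_succ hi)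
  exact h (n + 1) path (Nat.succ_le_succ hn) hpath hac 1 (n + 1) (Nat.succ_lt_succ hn) le_rfl

theorem ShortcutFree.dir_of_reflTransGen_of_transGen (h : ShortcutFree dir) {a b c : V}
    (hab : ReflTransGen dir a b) (hbc : TransGen dir b c) (hac : dir a c) : dir b c := by
  induction hab using ReflTransGen.head_induction_on with
  | refl => exact hac
  | head had hdb ih => exact ih (h.dir_of_dir_of_transGen had (hbc.trans_right hdb) hac)

end

theorem cobipartite_typeC_predecessor_restriction_general
    {V : Type*} {dir : V → V → Prop} (hdir : SemiTransitive dir) {s t y : V}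
    (hst : dir s t) (hyt : TransGen dir y t) :
    ¬ dir t y ∧ (ReflTransGen dir s y → dir y t) :=
  ⟨fun hty => hdir.1 t (hyt.head hty),
    fun hsy => hdir.2.dir_of_reflTransGen_of_transGen hsy hyt hst⟩

/-- Let `D` (= `dir`) be a semi-transitive orientation of a graph `G` whose vertex set is
partitioned into two cliques `A` and `B`. Let `x ∈ A` and `s, t ∈ B` with oriented edges
`s → t`, `s → x` and `x → t`. Then for every `y ∈ A` with the edge between `x` and `y`
oriented `y → x`: (a) there is no edge oriented `t → y`, and (b) if there is an edge
oriented `s → y`, then `y` is adjacent to `t`. -/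
theorem cobipartite_typeC_predecessor_restriction
    {V : Type*} (G : SimpleGraph V) (A B : Set V)
    (hcover : A ∪ B = Set.univ) (hdisj : Disjoint A B)
    (hA : G.IsClique A) (hB : G.IsClique B)
    (dir : V → V → Prop) (hor : IsOrientation G dir) (hst : SemiTransitive dir)
    (x s t : V) (hx : x ∈ A) (hs : s ∈ B) (ht : t ∈ B)
    (hst' : dir s t) (hsx : dir s x) (hxt : dir x t) :
    ∀ y ∈ A, dir y x → ¬ dir t y ∧ (dir s y → G.Adj y t) := by
  intro y _ hyx
  have hyt : TransGen dir y t := .head hyx (.single hxt)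
  obtain ⟨hty, hsy⟩ := cobipartite_typeC_predecessor_restriction_general hst hst' hyt
  exact ⟨hty, fun h => hor.1 y t (hsy (.single h))⟩
end
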